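/- Let $a < b$ be relatively prime positive integers, $g = ab - a - b$, and let $c$ be a real number with $0 \le c < g$. Then the number of integers $n \in [g - c, g]$ that are NOT representable as $ax + by$ with nonnegative integers $x, y$ equals $\sum_{y=0}^{\lfloor c/b \rfloor} \left( \left\lfloor \frac{c - by}{a} \right\rfloor + 1 \right)$. -/

import Mathlib

/-!
The reflection `n ↦ g - n` exchanges representable and non-representable integers in `[0, g]`
(`not_representable_reflect` and `exists_representable_reflect`). Hence the non-representable
`n ∈ [g - c, g]` are exactly the numbers `g - (a x + b y)` with `a x + b y ≤ c`. Since
`c < g < a b`, each such number comes from only one pair `(x, y)` (`representation_unique`), so the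
count is the number of lattice points `x, y ≥ 0` with `a x + b y ≤ c`, which is the sum on the
right-hand side when the points are grouped by `y`.
-/

/-- The number `g` is not a sum of two representable numbers: adding `a + b` to such a sum would
write `a b` as a combination of `a` and `b` with positive coefficients. -/
theorem not_representable_reflect {a b : ℕ} (hcop : Nat.Coprime a b) {n x y x' y' : ℕ}
    (h : n + (a * x + b * y) + a + b = a * b) : n ≠ a * x' + b * y' := by
  rintro rfl
  refine Nat.Coprime.mul_add_mul_ne_mul hcop (a := x + x' + 1) (b := y + y' + 1)
    (by omega) (by omega) ?_
  linarith

/-- If `n` is not representable then `g - n` is a nonnegative representable number. -/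
theorem exists_representable_reflect {a b : ℕ} (ha : 0 < a) (hb : 0 < b) (hcop : Nat.Coprime a b)
    {n : ℕ} (hn : ¬ ∃ x y : ℕ, n = a * x + b * y) :
    ∃ x y : ℕ, n + (a * x + b * y) + a + b = a * b := by
  -- The Chinese remainder theorem gives `b * y ≡ n [MOD a]` with `y < a`.
  have hlt := Nat.chineseRemainder_lt_mul hcop n 0 ha.ne' hb.ne'
  obtain ⟨w, hw1, hw2, hwlt⟩ : ∃ w, w ≡ n [MOD a] ∧ w ≡ 0 [MOD b] ∧ w < a * b :=
    ⟨_, (Nat.chineseRemainder hcop n 0).2.1, (Nat.chineseRemainder hcop n 0).2.2, hlt⟩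
  obtain ⟨y, rfl⟩ := (Nat.modEq_zero_iff_dvd).1 hw2
  have hya : y < a := by
    rw [mul_comm a b] at hwlt
    exact Nat.lt_of_mul_lt_mul_left hwlt
  -- As `n` is not representable, `n = b * y - a * k` with `k > 0`.
  have hny : n < b * y := by
    by_contra! hle
    obtain ⟨k, hk⟩ := (Nat.modEq_iff_dvd' hle).1 hw1
    exact hn ⟨k, y, by omega⟩
  obtain ⟨k, hk⟩ := (Nat.modEq_iff_dvd' hny.le).1 hw1.symm
  obtain ⟨k, rfl⟩ : ∃ j, k = j + 1 := Nat.exists_eq_succ_of_ne_zero (by rintro rfl; omega)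
  obtain ⟨d, rfl⟩ : ∃ d, a = y + 1 + d := Nat.exists_eq_add_of_le hya
  refine ⟨k, d, ?_⟩
  have hk' : n + (y + 1 + d) * (k + 1) = b * y := by omega
  linarith

theorem representation_unique {a b : ℕ} (hcop : Nat.Coprime a b) {x y x' y' : ℕ}
    (h : a * x + b * y = a * x' + b * y') (hlt : a * x + b * y < a * b) : x = x' ∧ y = y' := by
  have hy : y < a := by
    refine Nat.lt_of_mul_lt_mul_left (a := b) ?_
    rw [mul_comm b a]; omega
  have hy' : y' < a := by
    refine Nat.lt_of_mul_lt_mul_left (a := b) ?_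
    rw [mul_comm b a]; omega
  have ha : 0 < a := by omega
  have hmod : b * y ≡ b * y' [MOD a] := by
    have := congrArg (· % a) h
    simpa [Nat.ModEq, Nat.mul_add_mod] using this
  have hyy : y = y' :=
    (Nat.ModEq.cancel_left_of_coprime hcop hmod).eq_of_lt_of_lt hy hy'
  subst hyy
  exact ⟨Nat.eq_of_mul_eq_mul_left ha (by omega), rfl⟩

/-- The index set of the double sum consists of the lattice points with `a x + b y ≤ c`. The bound
on `y` ensures `c - b y ≥ 0`, so the natural-number floor is the true floor. -/
theorem mem_index_iff {a b : ℕ} (ha : 0 < a) (hb : 0 < b) {c : ℝ} (hc0 : 0 ≤ c) (x y : ℕ) :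
    (y < ⌊c / (b : ℝ)⌋₊ + 1 ∧ x < ⌊(c - (b : ℝ) * y) / (a : ℝ)⌋₊ + 1) ↔
      ((a * x + b * y : ℕ) : ℝ) ≤ c := by
  have ha' : (0 : ℝ) < a := by exact_mod_cast ha
  have hb' : (0 : ℝ) < b := by exact_mod_cast hb
  have hx0 : (0 : ℝ) ≤ a * x := by positivity
  rw [Nat.lt_succ_iff, Nat.lt_succ_iff, Nat.le_floor_iff (by positivity), le_div_iff₀ hb']
  push_cast
  constructor
  · rintro ⟨h1, h2⟩
    rw [Nat.le_floor_iff (div_nonneg (by linarith) ha'.le), le_div_iff₀ ha'] at h2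
    linarith
  · intro h
    refine ⟨by linarith, ?_⟩
    rw [Nat.le_floor_iff (div_nonneg (by linarith) ha'.le), le_div_iff₀ ha']
    linarith

/-- For relatively prime positive integers `a < b`, `g = a*b - a - b`, and a real
`0 ≤ c < g`, the number of integers `n ∈ [g - c, g]` NOT representable as
`a*x + b*y` with nonnegative `x, y` equals `∑_{y=0}^{⌊c/b⌋} (⌊(c - b*y)/a⌋ + 1)`. -/
theorem count_nonrepresentable_final_segment
    (a b : ℕ) (ha : 0 < a) (hab : a < b) (hcop : Nat.Coprime a b)
    (c : ℝ) (hc0 : 0 ≤ c) (hcg : c < (a * b - a - b : ℕ)) :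
    {n : ℕ | (a * b - a - b : ℕ) - c ≤ (n : ℝ) ∧ (n : ℝ) ≤ (a * b - a - b : ℕ) ∧
        ¬ ∃ x y : ℕ, n = a * x + b * y}.ncard =
      ∑ y ∈ Finset.range (⌊c / (b : ℝ)⌋₊ + 1), (⌊(c - (b : ℝ) * y) / (a : ℝ)⌋₊ + 1) := by
  have hb : 0 < b := ha.trans hab
  obtain ⟨g, hg⟩ : ∃ g, g = a * b - a - b := ⟨_, rfl⟩
  rw [← hg] at hcg ⊢
  -- `0 ≤ c < g` forces `g > 0`, so the truncated subtraction is exact.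
  have hgpos : 0 < g := by exact_mod_cast hc0.trans_lt hcg
  have hgab : g + a + b = a * b := by omega
  let I : Finset (Σ _ : ℕ, ℕ) := (Finset.range (⌊c / (b : ℝ)⌋₊ + 1)).sigma
    fun y => Finset.range (⌊(c - (b : ℝ) * y) / (a : ℝ)⌋₊ + 1)
  have hI : ∀ p : Σ _ : ℕ, ℕ, p ∈ I ↔ ((a * p.2 + b * p.1 : ℕ) : ℝ) ≤ c := fun p => by
    simp only [I, Finset.mem_sigma, Finset.mem_range]
    exact mem_index_iff ha hb hc0 p.2 p.1
  have hIg : ∀ p ∈ I, a * p.2 + b * p.1 < g := fun p hp => by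
    exact_mod_cast ((hI p).1 hp).trans_lt hcg
  let f : (Σ _ : ℕ, ℕ) → ℕ := fun p => g - (a * p.2 + b * p.1)
  have hset : {n : ℕ | (g : ℝ) - c ≤ (n : ℝ) ∧ (n : ℝ) ≤ g ∧
      ¬ ∃ x y : ℕ, n = a * x + b * y} = (I.image f : Finset ℕ) := by
    ext n
    simp only [Set.mem_ofPred_eq, Finset.coe_image, Set.mem_image, Finset.mem_coe]
    constructor
    · rintro ⟨h1, -, h3⟩
      obtain ⟨x, y, hxy⟩ := exists_representable_reflect ha hb hcop h3
      have hsum : n + (a * x + b * y) = g := by omega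
      refine ⟨⟨y, x⟩, (hI _).2 ?_, ?_⟩
      · have : (n : ℝ) + ((a * x + b * y : ℕ) : ℝ) = g := by exact_mod_cast hsum
        linarith
      · simp only [f]; omega
    · rintro ⟨p, hp, rfl⟩
      have hlt := hIg p hp
      have hle := (hI p).1 hp
      have hsum : f p + (a * p.2 + b * p.1) = g := by simp only [f]; omega
      have hsum' : (f p : ℝ) + ((a * p.2 + b * p.1 : ℕ) : ℝ) = g := by exact_mod_cast hsum
      refine ⟨by linarith, ?_, ?_⟩
      · exact_mod_cast Nat.sub_le _ _
      · rintro ⟨x', y', h⟩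
        exact not_representable_reflect (x := p.2) (y := p.1) hcop (by omega) h
  have hinj : Set.InjOn f I := by
    rintro ⟨y, x⟩ hp ⟨y', x'⟩ hp' h
    have h1 := hIg _ hp
    have h2 := hIg _ hp'
    simp only [f] at h h1 h2
    obtain ⟨rfl, rfl⟩ := representation_unique hcop
      (show a * x + b * y = a * x' + b * y' by omega) (by omega)
    rfl
  rw [hset, Set.ncard_coe_finset, Finset.card_image_of_injOn hinj, Finset.card_sigma]
  simp
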